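/- Suppose (S,d) is a δ-hyperbolic geodesic metric space with δ ∈ ℕ and a group G acts on S isometrically and acylindrically. Then for any ξ ∈ ∂S, the stabilizer Stab_G(ξ) = {g ∈ G : gξ = ξ} is virtually cyclic. In particular, for any countable group acting acylindrically on a hyperbolic geodesic metric space, all stabilizers of Gromov boundary points are amenable. -/

import Mathlib

open scoped ENNReal

noncomputable section

namespace ArXiv

/-! ### Gromov products, hyperbolicity and the Gromov boundary,
for a general distance function -/

variable {α : Type*}

/-- The Gromov product of `x` and `y` at `o` with respect to the distance function `d`. -/
def gprod (d : α → α → ℝ) (x y o : α) : ℝ := (d x o + d y o - d x y) / 2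

/-- The four-point δ-hyperbolicity condition. -/
def HyperbolicWith (d : α → α → ℝ) (δ : ℝ) : Prop :=
  ∀ w x y z : α, min (gprod d x y w) (gprod d y z w) - δ ≤ gprod d x z w

/-- Gromov hyperbolicity of the distance function `d`. -/
def IsHyperbolic (d : α → α → ℝ) : Prop := ∃ δ : ℝ, 0 ≤ δ ∧ HyperbolicWith d δ

/-- A sequence converges to infinity: the Gromov products at some (equivalently, any)
basepoint tend to infinity. -/
def ConvInf (d : α → α → ℝ) (x : ℕ → α) : Prop :=
  ∀ o : α, ∀ R : ℝ, ∃ N : ℕ, ∀ i, N ≤ i → ∀ j, N ≤ j → R ≤ gprod d (x i) (x j) o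

/-- Sequences converging to infinity. -/
abbrev BSeq (d : α → α → ℝ) := {x : ℕ → α // ConvInf d x}

/-- The equivalence of sequences converging to infinity defining the Gromov boundary. -/
def BRel (d : α → α → ℝ) (x y : BSeq d) : Prop :=
  ∀ o : α, ∀ R : ℝ, ∃ N : ℕ, ∀ i, N ≤ i → ∀ j, N ≤ j → R ≤ gprod d (x.1 i) (y.1 j) o

/-- The (sequential) Gromov boundary of `(α, d)`. -/
abbrev Bdry (d : α → α → ℝ) := Quot (BRel d)

/-- The extension of the Gromov product at `o` to boundary points. -/
def bgp (d : α → α → ℝ) (o : α) (ξ η : Bdry d) : EReal :=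
  sSup {r : EReal | ∃ x y : BSeq d, Quot.mk (BRel d) x = ξ ∧ Quot.mk (BRel d) y = η ∧
    r = Filter.liminf
      (fun pq : ℕ × ℕ => ((gprod d (x.1 pq.1) (y.1 pq.2) o : ℝ) : EReal)) Filter.atTop}

/-- The canonical topology on the Gromov boundary, generated by the sets
`{η | (ξ,η)_o > n}`. -/
def bdryTop (d : α → α → ℝ) : TopologicalSpace (Bdry d) :=
  TopologicalSpace.generateFrom
    {U : Set (Bdry d) | ∃ (ξ : Bdry d) (o : α) (n : ℝ), U = {η | (n : EReal) < bgp d o ξ η}}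

/-! ### Stabilizers of boundary points of acylindrical actions -/

/-- `α` is a geodesic metric space: any two points are joined by an isometrically
embedded segment. -/
def GeodesicSpace (α : Type*) [MetricSpace α] : Prop :=
  ∀ x y : α, ∃ f : ℝ → α, f 0 = x ∧ f (dist x y) = y ∧
    ∀ s t : ℝ, s ∈ Set.Icc 0 (dist x y) → t ∈ Set.Icc 0 (dist x y) →
      dist (f s) (f t) = |s - t|

/-- `g` fixes the boundary point `ξ` under the natural extension of the action of `G`
on `(α,d)` to the Gromov boundary. -/
def BFixes {α G : Type*} [SMul G α] (d : α → α → ℝ) (g : G) (ξ : Bdry d) : Prop :=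
  ∃ (x : BSeq d) (h : ConvInf d fun n => g • x.1 n),
    Quot.mk (BRel d) x = ξ ∧ Quot.mk (BRel d) (⟨fun n => g • x.1 n, h⟩ : BSeq d) = ξ

/-- The subset `S` of a group `G` (in practice, a subgroup) is amenable: it carries a
finitely additive, left translation invariant probability measure defined on all its
subsets. -/
def AmenableSet {G : Type*} [Group G] (S : Set G) : Prop :=
  ∃ μ : Set G → ℝ, μ S = 1 ∧ (∀ A : Set G, A ⊆ S → 0 ≤ μ A) ∧
    (∀ A B : Set G, A ⊆ S → B ⊆ S → Disjoint A B → μ (A ∪ B) = μ A + μ B) ∧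
    ∀ g ∈ S, ∀ A : Set G, A ⊆ S → μ ((fun z => g * z) '' A) = μ A

/-!
A boundary point `ξ` of a hyperbolic space has a coarse Busemann function `h`, canonical up to an
additive constant and a bounded error. An element `g` fixing `ξ` therefore shifts `h` by a nearly
constant amount, so `g ↦ h (g • o) - h o` is a quasimorphism on the stabilizer of `ξ`. This
quasimorphism is proper: an element with a small value moves all points far out on a ray towards
`ξ` by a bounded amount, and acylindricity leaves only finitely many such elements. A group with a
proper quasimorphism is virtually cyclic, because powers of any element of large value bring
every other element back to a set of bounded value. Amenability follows by averaging an invariant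
mean on `ℤ` over the cosets of the cyclic subgroup.
-/

section Quasimorphism

open Filter

theorem exists_int_lt_and_le_succ {β : Type*} [LinearOrder β] [NoMinOrder β] {a : ℤ → β}
    (hbot : Tendsto a atBot atBot) (htop : Tendsto a atTop atTop) (y : β) :
    ∃ n, a n < y ∧ y ≤ a (n + 1) := by
  obtain ⟨N, hN⟩ := eventually_atTop.1 (htop.eventually_ge_atTop y)
  have hbdd : ∀ n, a n < y → n ≤ N := fun n hn =>
    le_of_not_ge fun hNn => (hN n hNn).not_gt hn
  obtain ⟨n, hn, hmax⟩ :=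
    Int.exists_greatest_of_bdd ⟨N, hbdd⟩ (hbot.eventually_lt_atBot y).exists
  exact ⟨n, hn, not_lt.1 fun h => (hmax _ h).not_gt (lt_add_one n)⟩

theorem exists_int_mem_Icc_of_increments {a : ℤ → ℝ} {c L : ℝ} (hc : 0 < c)
    (hlower : ∀ n, a n + c ≤ a (n + 1)) (hupper : ∀ n, a (n + 1) ≤ a n + L) :
    ∃ n, a n ∈ Set.Icc 0 L := by
  have hmono : Monotone fun n : ℤ => a n - c * n := monotone_int_of_le_succ fun n => by
    push_cast
    linarith [hlower n]
  have htop : Tendsto a atTop atTop := by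
    refine tendsto_atTop_mono' _ ?_
      (tendsto_atTop_add_const_right _ (a 0) (tendsto_intCast_atTop_atTop.const_mul_atTop hc))
    filter_upwards [eventually_ge_atTop 0] with n hn
    have := hmono hn
    simp only [Int.cast_zero] at this
    linarith
  have hbot : Tendsto a atBot atBot := by
    have hcast : Tendsto ((↑) : ℤ → ℝ) atBot atBot := tendsto_intCast_atBot_iff.2 tendsto_id
    refine tendsto_atBot_mono' _ ?_
      (tendsto_atBot_add_const_right _ (a 0) (hcast.const_mul_atBot hc))
    filter_upwards [eventually_le_atBot 0] with n hn
    have := hmono hn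
    simp only [Int.cast_zero] at this
    linarith
  obtain ⟨n, hneg, hnonneg⟩ := exists_int_lt_and_le_succ hbot htop 0
  exact ⟨n + 1, hnonneg, by linarith [hupper n]⟩

variable {K : Type*} [Group K] {f : K → ℝ} {D : ℝ}

/-- `f` is a quasimorphism of defect at most `D`. -/
def IsQuasimorphism (f : K → ℝ) (D : ℝ) : Prop :=
  ∀ g h : K, |f (g * h) - f g - f h| ≤ D

namespace IsQuasimorphism

theorem abs_le_of_forall_le (hf : IsQuasimorphism f D) (hle : ∀ g, f g ≤ D) (g : K) :
    |f g| ≤ 3 * D := by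
  have hone := abs_le.1 (hf 1 1)
  have hinv := abs_le.1 (hf g g⁻¹)
  rw [mul_one] at hone
  rw [mul_inv_cancel] at hinv
  exact abs_le.2 ⟨by linarith [hle g⁻¹], by linarith [hle g]⟩

/-- Multiplying by `z` on the right moves the value of `f` by an amount in
`[f z - D, f z + D]`. -/
theorem exists_abs_mul_zpow_le (hf : IsQuasimorphism f D) {z : K} (hz : D < f z) (g : K) :
    ∃ n : ℤ, |f (g * z ^ n)| ≤ f z + D := by
  have hstep : ∀ n : ℤ, |f (g * z ^ (n + 1)) - f (g * z ^ n) - f z| ≤ D := fun n => by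
    simpa only [zpow_add_one, mul_assoc] using hf (g * z ^ n) z
  obtain ⟨n, hnonneg, hle⟩ := exists_int_mem_Icc_of_increments
    (a := fun n => f (g * z ^ n)) (c := f z - D) (L := f z + D) (sub_pos.2 hz)
    (fun n => by linarith [(abs_le.1 (hstep n)).1])
    (fun n => by linarith [(abs_le.1 (hstep n)).2])
  exact ⟨n, (abs_of_nonneg hnonneg).trans_le hle⟩

theorem exists_zpowers_finiteIndex (hf : IsQuasimorphism f D)
    (hfin : ∀ C : ℝ, {g | |f g| ≤ C}.Finite) :
    ∃ z : K, (Subgroup.zpowers z).FiniteIndex := by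
  by_cases hbdd : ∀ g, f g ≤ D
  · have : Finite K := Set.finite_univ_iff.1 <|
      (hfin (3 * D)).subset fun g _ => hf.abs_le_of_forall_le hbdd g
    exact ⟨1, inferInstance⟩
  · push Not at hbdd
    obtain ⟨z, hz⟩ := hbdd
    refine ⟨z, Subgroup.finiteIndex_of_leftCoset_cover_const
      (s := (hfin (f z + D)).toFinset) (g := id) (Set.eq_univ_of_forall fun g => ?_)⟩
    obtain ⟨n, hn⟩ := hf.exists_abs_mul_zpow_le hz g
    refine Set.mem_biUnion (x := g * z ^ n) (by simpa using hn) ?_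
    rw [id, mem_leftCoset_iff, mul_inv_rev, inv_mul_cancel_right]
    exact inv_mem (Subgroup.zpow_mem_zpowers z n)

end IsQuasimorphism

end Quasimorphism

section InvariantMean

open Filter MeasureTheory Topology
open scoped Pointwise symmDiff

/-- `m` is a left-invariant finitely additive probability measure defined on all subsets
of `K`. -/
structure IsInvariantMean {K : Type*} [Group K] (m : Set K → ℝ≥0∞) : Prop where
  univ : m Set.univ = 1
  union : ∀ s t, Disjoint s t → m (s ∪ t) = m s + m t
  smul : ∀ (g : K) (s : Set K), m (g • s) = m s

theorem symmDiff_vadd_Icc_subset (g n : ℤ) :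
    (g +ᵥ Set.Icc 0 n) ∆ Set.Icc 0 n ⊆ Set.Icc (-|g|) |g| ∪ Set.Icc (n - |g|) (n + |g|) := by
  intro k hk
  simp only [Set.mem_symmDiff, Set.mem_vadd_set_iff_neg_vadd_mem, vadd_eq_add, Set.mem_Icc,
    Set.mem_union] at hk ⊢
  grind

theorem count_Icc_int (a b : ℤ) :
    Measure.count (Set.Icc a b) = ((b + 1 - a).toNat : ℝ≥0∞) := by
  rw [← Finset.coe_Icc, Measure.count_apply_finset, Int.card_Icc]

theorem isAddFoelner_Icc_int :
    IsAddFoelner ℤ Measure.count atTop fun n : ℕ => Set.Icc (0 : ℤ) n where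
  eventually_measurableSet := .of_forall fun _ => .of_discrete
  eventually_meas_ne_zero := .of_forall fun n => by
    rw [count_Icc_int, Nat.cast_ne_zero]
    lia
  eventually_meas_ne_top := .of_forall fun n => by
    rw [count_Icc_int]
    exact ENNReal.natCast_ne_top _
  tendsto_meas_vadd_symmDiff g := by
    let c : ℕ := (2 * |g| + 1).toNat
    have hlim : Tendsto (fun n : ℕ => (c + c : ℝ≥0∞) / n) atTop (𝓝 0) := by
      simpa only [ENNReal.div_top] using ENNReal.Tendsto.const_div (a := (c + c : ℝ≥0∞))
        ENNReal.tendsto_nat_nhds_top (.inr (by finiteness))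
    refine tendsto_of_tendsto_of_tendsto_of_le_of_le tendsto_const_nhds hlim
      (fun _ => zero_le) fun n => ENNReal.div_le_div ?_ ?_
    · calc Measure.count ((g +ᵥ Set.Icc 0 (n : ℤ)) ∆ Set.Icc 0 (n : ℤ))
          ≤ Measure.count (Set.Icc (-|g|) |g|) +
              Measure.count (Set.Icc (n - |g|) (n + |g|)) :=
            (measure_mono (symmDiff_vadd_Icc_subset g n)).trans (measure_union_le _ _)
        _ = c + c := by
            rw [count_Icc_int, count_Icc_int]
            congr 3 <;> lia
    · rw [count_Icc_int]
      exact_mod_cast (by lia : n ≤ ((n : ℤ) + 1 - 0).toNat)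

theorem exists_isInvariantMean_multiplicative_int :
    ∃ m : Set (Multiplicative ℤ) → ℝ≥0∞, IsInvariantMean m := by
  obtain ⟨m, huniv, hunion, hvadd⟩ := isAddFoelner_Icc_int.amenable
  refine ⟨fun s => m (Multiplicative.ofAdd ⁻¹' s), huniv, fun s t hst => ?_, fun g s => ?_⟩
  · exact hunion _ _ .of_discrete (hst.preimage _)
  · refine (congrArg m ?_).trans (hvadd g.toAdd (Multiplicative.ofAdd ⁻¹' s))
    ext k
    simp only [Set.mem_preimage, Set.mem_smul_set_iff_inv_smul_mem,
      Set.mem_vadd_set_iff_neg_vadd_mem]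
    rfl

namespace IsInvariantMean

variable {H K : Type*} [Group H] [Group K] {m : Set H → ℝ≥0∞}

theorem le_one (hm : IsInvariantMean m) (s : Set H) : m s ≤ 1 := by
  rw [← hm.univ, ← Set.union_compl_self s, hm.union s sᶜ disjoint_compl_right]
  exact le_self_add

theorem preimage_inv_smul_eq (hm : IsInvariantMean m) (φ : H →* K) {x y : K}
    (hxy : x⁻¹ * y ∈ φ.range) (A : Set K) : m (φ ⁻¹' (x⁻¹ • A)) = m (φ ⁻¹' (y⁻¹ • A)) := by
  obtain ⟨h, hh⟩ := hxy
  have hx : x⁻¹ = φ h * y⁻¹ := by rw [hh, mul_inv_cancel_right]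
  rw [hx, mul_smul, ← hm.smul h (φ ⁻¹' (y⁻¹ • A))]
  congr 1
  ext k
  simp only [Set.mem_preimage, Set.mem_smul_set_iff_inv_smul_mem, smul_eq_mul, map_mul, map_inv]

/-- The mean on `K` averages, over the left cosets of the range of `φ`, the mean of `H`
transported to each coset. -/
theorem exists_of_finiteIndex_range (hm : IsInvariantMean m) (φ : H →* K)
    [φ.range.FiniteIndex] : ∃ M : Set K → ℝ≥0∞, IsInvariantMean M := by
  classical
  have := Fintype.ofFinite (K ⧸ φ.range)
  let c : ℝ≥0∞ := Fintype.card (K ⧸ φ.range)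
  have hc : c ≠ 0 := Nat.cast_ne_zero.2 Fintype.card_ne_zero
  refine ⟨fun A => (∑ q : K ⧸ φ.range, m (φ ⁻¹' (q.out⁻¹ • A))) / c,
    ?_, fun A B hAB => ?_, fun g A => ?_⟩
  · simpa [hm.univ] using ENNReal.div_self hc (ENNReal.natCast_ne_top _)
  · simp_rw [← ENNReal.add_div, ← Finset.sum_add_distrib, Set.smul_set_union, Set.preimage_union]
    congr! with q
    exact hm.union _ _ ((Set.disjoint_smul_set.2 hAB).preimage φ)
  · congr 1
    refine Fintype.sum_equiv (MulAction.toPerm g⁻¹) _ _ fun q => ?_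
    have hcoset : (g⁻¹ * q.out)⁻¹ * (g⁻¹ • q).out ∈ φ.range := by
      rw [← QuotientGroup.eq, QuotientGroup.out_eq', ← smul_eq_mul,
        MulAction.Quotient.mk_smul_out]
    rw [MulAction.toPerm_apply, ← hm.preimage_inv_smul_eq φ hcoset, mul_inv_rev, inv_inv,
      mul_smul]

theorem amenableSet {H : Subgroup K} {m : Set H → ℝ≥0∞} (hm : IsInvariantMean m) :
    AmenableSet (H : Set K) := by
  have hfin : ∀ s, m s ≠ ∞ := fun s => ((hm.le_one s).trans_lt ENNReal.one_lt_top).ne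
  refine ⟨fun A => (m (Subtype.val ⁻¹' A)).toReal, ?_, fun _ _ => ENNReal.toReal_nonneg,
    fun A B _ _ hAB => ?_, fun g hg A _ => ?_⟩
  · have hpre : (Subtype.val : H → K) ⁻¹' H = Set.univ := Subtype.coe_preimage_self _
    beta_reduce
    rw [hpre, hm.univ, ENNReal.toReal_one]
  · beta_reduce
    rw [Set.preimage_union, hm.union _ _ (hAB.preimage _), ENNReal.toReal_add (hfin _) (hfin _)]
  · refine congrArg ENNReal.toReal ((congrArg m ?_).trans (hm.smul ⟨g, hg⟩ (Subtype.val ⁻¹' A)))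
    ext k
    simp [Set.mem_smul_set_iff_inv_smul_mem]

end IsInvariantMean

theorem amenableSet_of_zpowers_finiteIndex {K : Type*} [Group K] {H : Subgroup K} (z : H)
    [(Subgroup.zpowers z).FiniteIndex] : AmenableSet (H : Set K) := by
  obtain ⟨m, hm⟩ := exists_isInvariantMean_multiplicative_int
  have : (zpowersHom H z).range.FiniteIndex := ‹(Subgroup.zpowers z).FiniteIndex›
  obtain ⟨M, hM⟩ := hm.exists_of_finiteIndex_range (zpowersHom H z)
  exact hM.amenableSet

end InvariantMean

open scoped Pointwise in
theorem exists_finset_subset_iUnion_zpowers {G : Type*} [Group G] {H : Subgroup G} (z : H)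
    [(Subgroup.zpowers z).FiniteIndex] :
    ∃ T : Finset G,
      (H : Set G) ⊆ ⋃ t ∈ T, (fun k => t * k) '' (Subgroup.zpowers (z : G) : Set G) := by
  classical
  obtain ⟨S, hS, -⟩ := (Subgroup.zpowers z).exists_isComplement_left 1
  refine ⟨hS.finite_left.toFinset.image (↑), fun g hg => ?_⟩
  obtain ⟨s, hs, k, ⟨n, hn⟩, hsk⟩ : (⟨g, hg⟩ : H) ∈ S * (Subgroup.zpowers z : Set H) :=
    hS.mul_eq ▸ Set.mem_univ _
  refine Set.mem_biUnion (Finset.mem_image_of_mem _ (hS.finite_left.mem_toFinset.2 hs))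
    ⟨(z : G) ^ n, ⟨n, rfl⟩, ?_⟩
  simpa [← hn] using congrArg Subtype.val hsk

section Horofunction

open Filter Topology

variable [PseudoMetricSpace α]

/-- A space is weakly geodesic with constant `C` (Kasparov–Skandalis) if between any two points
there are points at every intermediate distance, up to an error of `C`. -/
def IsWeaklyGeodesic (α : Type*) [PseudoMetricSpace α] (C : ℝ) : Prop :=
  ∀ x y : α, ∀ t ∈ Set.Icc 0 (dist x y), ∃ p, dist x p ≤ t + C ∧ dist p y ≤ dist x y - t + C

theorem GeodesicSpace.isWeaklyGeodesic {α : Type*} [MetricSpace α] (hgeo : GeodesicSpace α) :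
    IsWeaklyGeodesic α 0 := by
  intro x y t ht
  obtain ⟨f, hfx, hfy, hf⟩ := hgeo x y
  refine ⟨f t, ?_, ?_⟩
  · have h := hf 0 t (Set.left_mem_Icc.2 dist_nonneg) ht
    rw [hfx, zero_sub, abs_neg, abs_of_nonneg ht.1] at h
    linarith
  · have h := hf t (dist x y) ht (Set.right_mem_Icc.2 dist_nonneg)
    rw [hfy, abs_sub_comm, abs_of_nonneg (sub_nonneg.2 ht.2)] at h
    linarith

/-- Acylindricity of an isometric action, with cardinalities of possibly infinite sets measured
by `Set.encard`. -/
def IsAcylindrical (G α : Type*) [PseudoMetricSpace α] [SMul G α] : Prop :=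
  ∀ ε > 0, ∃ R : ℝ, ∃ N : ℕ, ∀ x y : α, R ≤ dist x y →
    {g : G | dist x (g • x) ≤ ε ∧ dist y (g • y) ≤ ε}.encard ≤ N

/-- `h` is a coarse Busemann function of a `δ`-hyperbolic space: it behaves like the
renormalised distance to a point at infinity. The first field is the four-point inequality with
that point as one vertex; in the third, `(h o + dist o q - h q) / 2` plays the role of the
Gromov product at `o` of `q` with the point at infinity. -/
structure IsCoarseHorofunction (δ : ℝ) (h : α → ℝ) : Prop where
  four_point : ∀ a b c, dist a c + h b ≤ max (dist a b + h c) (dist b c + h a) + 2 * δ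
  le_add_dist : ∀ a b, h a ≤ h b + dist a b
  exists_far : ∀ (o : α) (t : ℝ), ∃ q, h q + 2 * t ≤ h o + dist o q

namespace IsCoarseHorofunction

variable {h : α → ℝ} {δ C : ℝ}

theorem exists_ray_point (hh : IsCoarseHorofunction δ h) (hgeo : IsWeaklyGeodesic α C)
    (o : α) (s : ℝ) : ∃ p, s ≤ dist o p ∧ h p + dist o p ≤ h o + (2 * C + 2 * δ) := by
  let t := max (s + C) 0
  obtain ⟨q, hq⟩ := hh.exists_far o t
  have ht : t ≤ dist o q := by linarith [hh.le_add_dist o q]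
  obtain ⟨p, hop, hpq⟩ := hgeo o q t ⟨le_max_right _ _, ht⟩
  have hs : s + C ≤ t := le_max_left _ _
  refine ⟨p, ?_, ?_⟩
  · linarith [dist_triangle o p q]
  · have h4 := hh.four_point o p q
    have : max (dist o p + h q) (dist p q + h o) ≤ dist o q + h o - t + C :=
      max_le (by linarith) (by linarith)
    linarith

/-- The four-point inequality puts both `p` and `φ p` far along rays to the point at infinity,
so that their distance is controlled by the difference of their heights. -/
theorem dist_map_le (hh : IsCoarseHorofunction δ h) {φ : α → α} (hφ : Isometry φ) {K c : ℝ}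
    (hφh : ∀ a b, |h (φ a) - h (φ b) - (h a - h b)| ≤ 2 * δ) {o p : α}
    (hK : |h (φ o) - h o| ≤ K) (hp : h p + dist o p ≤ h o + c)
    (hfar : dist o (φ o) + c + 2 * δ ≤ dist o p) : dist p (φ p) ≤ K + c + 4 * δ := by
  have hKl := abs_le.1 hK
  have hφp := abs_le.1 (hφh p o)
  have hnonneg : 0 ≤ dist o p + K := add_nonneg dist_nonneg ((abs_nonneg _).trans hK)
  have hop : dist o (φ p) ≤ dist o p + K + 2 * δ := by
    have h4 := hh.four_point o (φ o) (φ p)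
    rw [hφ.dist_eq] at h4
    have : max (dist o (φ o) + h (φ p)) (dist o p + h o) ≤ dist o p + K + h (φ o) :=
      max_le (by linarith) (by linarith)
    linarith
  have h4 := hh.four_point p o (φ p)
  rw [dist_comm p o] at h4
  have : max (dist o p + h (φ p)) (dist o (φ p) + h p) ≤ h o + K + c + 2 * δ :=
    max_le (by linarith) (by linarith)
  linarith

variable {G : Type*} [SMul G α] [IsIsometricSMul G α]

theorem exists_far_pair (hh : IsCoarseHorofunction δ h) (hgeo : IsWeaklyGeodesic α C) {F : Set G}
    (hF : F.Finite) (hFh : ∀ g ∈ F, ∀ a b : α, |h (g • a) - h (g • b) - (h a - h b)| ≤ 2 * δ)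
    {o : α} {K : ℝ} (hK : ∀ g ∈ F, |h (g • o) - h o| ≤ K) (R : ℝ) :
    ∃ p q : α, R ≤ dist p q ∧ ∀ g ∈ F,
      dist p (g • p) ≤ K + 2 * C + 6 * δ ∧ dist q (g • q) ≤ K + 2 * C + 6 * δ := by
  obtain ⟨B, hB⟩ := (hF.image fun g : G => dist o (g • o)).bddAbove
  let s := B + (2 * C + 2 * δ) + 2 * δ
  have hmove : ∀ g ∈ F, ∀ r, s ≤ dist o r → h r + dist o r ≤ h o + (2 * C + 2 * δ) →
      dist r (g • r) ≤ K + 2 * C + 6 * δ := fun g hg r hsr hr => by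
    have hfar : dist o (g • o) + (2 * C + 2 * δ) + 2 * δ ≤ dist o r := by
      linarith [hB (Set.mem_image_of_mem _ hg)]
    linarith [hh.dist_map_le (isometry_smul α g) (hFh g hg) (hK g hg) hr hfar]
  obtain ⟨p, hsp, hp⟩ := hh.exists_ray_point hgeo o s
  obtain ⟨q, hsq, hq⟩ := hh.exists_ray_point hgeo o (max s (dist o p + R))
  rw [max_le_iff] at hsq
  exact ⟨p, q, by linarith [dist_triangle o p q],
    fun g hg => ⟨hmove g hg p hsp hp, hmove g hg q hsq.1 hq⟩⟩

theorem finite_setOf_abs_le (hh : IsCoarseHorofunction δ h) (hgeo : IsWeaklyGeodesic α C)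
    (hacyl : IsAcylindrical G α) {Γ : Set G}
    (hΓ : ∀ g ∈ Γ, ∀ a b : α, |h (g • a) - h (g • b) - (h a - h b)| ≤ 2 * δ) (o : α) (K : ℝ) :
    {g ∈ Γ | |h (g • o) - h o| ≤ K}.Finite := by
  obtain ⟨R, N, hRN⟩ := hacyl (max 1 (K + 2 * C + 6 * δ)) (by positivity)
  by_contra hinf
  obtain ⟨F, hFsub, hFcard⟩ := Set.Infinite.exists_subset_card_eq hinf (N + 1)
  obtain ⟨p, q, hpq, hF⟩ := hh.exists_far_pair hgeo F.finite_toSet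
    (fun g hg => hΓ g (hFsub hg).1) (fun g hg => (hFsub hg).2) R
  have hFR : (F : Set G) ⊆ {g | dist p (g • p) ≤ max 1 (K + 2 * C + 6 * δ) ∧
      dist q (g • q) ≤ max 1 (K + 2 * C + 6 * δ)} := fun g hg =>
    ⟨(hF g hg).1.trans (le_max_right _ _), (hF g hg).2.trans (le_max_right _ _)⟩
  have hcard := (Set.encard_le_encard hFR).trans (hRN p q hpq)
  rw [Set.encard_coe_eq_coe_finsetCard, hFcard, Nat.cast_le] at hcard
  lia

end IsCoarseHorofunction

end Horofunction

section BoundaryAction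

variable {d : α → α → ℝ} {δ : ℝ}

theorem gprod_comm (hd : ∀ a b, d a b = d b a) (x y o : α) : gprod d x y o = gprod d y x o := by
  rw [gprod, gprod, hd x y, add_comm (d x o)]

theorem HyperbolicWith.four_point (hd : HyperbolicWith d δ) (x y z w : α) :
    d x z + d y w ≤ max (d x y + d z w) (d y z + d x w) + 2 * δ := by
  have h := hd w x y z
  rw [sub_le_iff_le_add, min_le_iff] at h
  rw [← sub_le_iff_le_add, le_max_iff]
  unfold gprod at h
  exact h.imp (fun h => by linarith) fun h => by linarith

theorem HyperbolicWith.add_le_add_of_lt (hd : HyperbolicWith d δ) {x y z w : α}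
    (hlt : d x y + d z w + 2 * δ < d x z + d y w) :
    d x z + d y w ≤ d y z + d x w + 2 * δ := by
  have h := hd.four_point x y z w
  rw [← max_add_add_right, le_max_iff] at h
  exact h.resolve_left hlt.not_ge

theorem HyperbolicWith.equivalence_bRel (hd : HyperbolicWith d δ) (hsymm : ∀ a b, d a b = d b a) :
    Equivalence (BRel d) where
  refl x := x.2
  symm {x y} hxy o R := by
    obtain ⟨N, hN⟩ := hxy o R
    exact ⟨N, fun i hi j hj => gprod_comm hsymm (x.1 j) (y.1 i) o ▸ hN j hj i hi⟩
  trans {x y z} hxy hyz o R := by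
    obtain ⟨M, hM⟩ := hxy o (R + δ)
    obtain ⟨N, hN⟩ := hyz o (R + δ)
    refine ⟨max M N, fun i hi j hj => ?_⟩
    rw [max_le_iff] at hi hj
    have := le_min (hM i hi.1 (max M N) (le_max_left _ _))
      (hN (max M N) (le_max_right _ _) j hj.2)
    linarith [hd o (x.1 i) (y.1 (max M N)) (z.1 j)]

theorem HyperbolicWith.bdry_mk_eq_iff (hd : HyperbolicWith d δ) (hsymm : ∀ a b, d a b = d b a)
    {x y : BSeq d} : (Quot.mk (BRel d) x = Quot.mk (BRel d) y) ↔ BRel d x y :=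
  Quot.eq.trans (hd.equivalence_bRel hsymm).eqvGen_iff

variable [PseudoMetricSpace α] {G : Type*} [Group G] [MulAction G α] [IsIsometricSMul G α]

theorem gprod_smul_smul (g : G) (x y o : α) :
    gprod dist (g • x) (g • y) o = gprod dist x y (g⁻¹ • o) := by
  conv_lhs => rw [← smul_inv_smul g o]
  simp only [gprod, dist_smul]

theorem ConvInf.smul {x : ℕ → α} (hx : ConvInf dist x) (g : G) : ConvInf dist (g • x) := by
  intro o R
  simpa only [Pi.smul_apply, gprod_smul_smul] using hx (g⁻¹ • o) R

instance : MulAction G (BSeq (dist : α → α → ℝ)) where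
  smul g x := ⟨g • x.1, x.2.smul g⟩
  one_smul x := Subtype.ext (one_smul G x.1)
  mul_smul g k x := Subtype.ext (mul_smul g k x.1)

theorem BRel.smul {x y : BSeq (dist : α → α → ℝ)} (hxy : BRel dist x y) (g : G) :
    BRel dist (g • x) (g • y) := by
  intro o R
  obtain ⟨N, hN⟩ := hxy (g⁻¹ • o) R
  exact ⟨N, fun i hi j hj => (gprod_smul_smul g (x.1 i) (y.1 j) o).symm ▸ hN i hi j hj⟩

instance : MulAction G (Bdry (dist : α → α → ℝ)) where
  smul g := Quot.map (g • ·) fun _ _ hxy => hxy.smul g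
  one_smul := Quot.ind fun x => congrArg (Quot.mk _) (one_smul G x)
  mul_smul g k := Quot.ind fun x => congrArg (Quot.mk _) (mul_smul g k x)

theorem bFixes_iff_mem_stabilizer {g : G} {ξ : Bdry (dist : α → α → ℝ)} :
    BFixes dist g ξ ↔ g ∈ MulAction.stabilizer G ξ := by
  constructor
  · rintro ⟨x, _, rfl, hgx⟩
    exact hgx
  · induction ξ using Quot.ind with
    | mk x => exact fun hgx => ⟨x, x.2.smul g, rfl, hgx⟩

end BoundaryAction

section BoundaryHorofunction

open Filter Topology

variable [PseudoMetricSpace α] {δ : ℝ}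

/-- The horofunction of a sequence `x`, normalised to vanish at `x 0`. The limit is taken along
an ultrafilter, so that it exists without passing to a subsequence. -/
def horofunction (x : ℕ → α) (a : α) : ℝ :=
  limUnder (hyperfilter ℕ : Filter ℕ) fun n => dist a (x n) - dist (x 0) (x n)

theorem tendsto_horofunction (x : ℕ → α) (a : α) :
    Tendsto (fun n => dist a (x n) - dist (x 0) (x n)) (hyperfilter ℕ)
      (𝓝 (horofunction x a)) := by
  refine tendsto_nhds_limUnder ?_
  have hmem : ∀ n, dist a (x n) - dist (x 0) (x n) ∈
      Set.Icc (-dist a (x 0)) (dist a (x 0)) := fun n =>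
    abs_le.1 (abs_dist_sub_le a (x 0) (x n))
  obtain ⟨l, -, hl⟩ := isCompact_Icc.ultrafilter_le_nhds'
    ((hyperfilter ℕ).map fun n => dist a (x n) - dist (x 0) (x n))
    (Ultrafilter.mem_map.2 (univ_mem' hmem))
  exact ⟨l, hl⟩

theorem HyperbolicWith.isCoarseHorofunction_horofunction
    (hd : HyperbolicWith (dist : α → α → ℝ) δ) {x : ℕ → α} (hx : ConvInf dist x) :
    IsCoarseHorofunction δ (horofunction x) where
  four_point a b c := by
    refine le_of_tendsto_of_tendsto' ((tendsto_horofunction x b).const_add (dist a c))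
      ((((tendsto_horofunction x c).const_add (dist a b)).max
        ((tendsto_horofunction x a).const_add (dist b c))).add_const (2 * δ)) fun n => ?_
    simp only [← add_sub_assoc, max_sub_sub_right]
    linarith [hd.four_point a b c (x n)]
  le_add_dist a b :=
    le_of_tendsto_of_tendsto' (tendsto_horofunction x a)
      ((tendsto_horofunction x b).add_const (dist a b)) fun n => by
        linarith [dist_triangle a b (x n)]
  exists_far o t := by
    obtain ⟨N, hN⟩ := hx o t
    refine ⟨x N, le_of_tendsto_of_tendsto ((tendsto_horofunction x (x N)).add_const (2 * t))
      ((tendsto_horofunction x o).add_const (dist o (x N))) ?_⟩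
    filter_upwards [Nat.hyperfilter_le_atTop (eventually_ge_atTop N)] with n hn
    have := hN N le_rfl n hn
    rw [gprod, dist_comm (x N) o, dist_comm (x n) o] at this
    linarith

theorem HyperbolicWith.abs_horofunction_sub_le (hd : HyperbolicWith (dist : α → α → ℝ) δ)
    {x y : BSeq (dist : α → α → ℝ)} (hxy : BRel dist x y) (a b : α) :
    |horofunction x.1 a - horofunction x.1 b - (horofunction y.1 a - horofunction y.1 b)|
      ≤ 2 * δ := by
  have hlim := ((tendsto_horofunction x.1 a).sub (tendsto_horofunction x.1 b)).sub
    ((tendsto_horofunction y.1 a).sub (tendsto_horofunction y.1 b))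
  refine le_of_tendsto hlim.abs ?_
  obtain ⟨N, hN⟩ := hxy a (δ + dist a b + 1)
  filter_upwards [Nat.hyperfilter_le_atTop (eventually_ge_atTop N)] with n hn
  have hprod := hN n hn n hn
  rw [gprod, dist_comm _ a, dist_comm _ a] at hprod
  have hab : dist a b + dist (x.1 n) (y.1 n) + 2 * δ < dist a (x.1 n) + dist b (y.1 n) := by
    linarith [dist_triangle a b (y.1 n)]
  have hba : dist b a + dist (x.1 n) (y.1 n) + 2 * δ < dist b (x.1 n) + dist a (y.1 n) := by
    linarith [dist_triangle a b (x.1 n), dist_comm a b]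
  rw [abs_le]
  constructor
  · linarith [hd.add_le_add_of_lt hba]
  · linarith [hd.add_le_add_of_lt hab]

variable {G : Type*} [Group G] [MulAction G α] [IsIsometricSMul G α]

theorem horofunction_smul (g : G) (x : ℕ → α) (a : α) :
    horofunction (g • x) (g • a) = horofunction x a := by
  simp only [horofunction, Pi.smul_apply, dist_smul]

theorem HyperbolicWith.abs_horofunction_smul_sub_le
    (hd : HyperbolicWith (dist : α → α → ℝ) δ) {x : BSeq (dist : α → α → ℝ)} {g : G}
    (hg : g ∈ MulAction.stabilizer G (Quot.mk (BRel dist) x)) (a b : α) :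
    |horofunction x.1 (g • a) - horofunction x.1 (g • b) -
      (horofunction x.1 a - horofunction x.1 b)| ≤ 2 * δ := by
  have hgx : BRel dist (g • x) x := (hd.bdry_mk_eq_iff dist_comm).1 hg
  have h := hd.abs_horofunction_sub_le hgx (g • a) (g • b)
  rwa [abs_sub_comm, show (g • x).1 = g • x.1 from rfl, horofunction_smul,
    horofunction_smul] at h

theorem HyperbolicWith.exists_zpowers_finiteIndex_stabilizer {C : ℝ}
    (hd : HyperbolicWith (dist : α → α → ℝ) δ) (hgeo : IsWeaklyGeodesic α C)
    (hacyl : IsAcylindrical G α) (ξ : Bdry (dist : α → α → ℝ)) :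
    ∃ z : MulAction.stabilizer G ξ, (Subgroup.zpowers z).FiniteIndex := by
  induction ξ using Quot.ind with | mk x =>
  let h := horofunction x.1
  let o := x.1 0
  have hequiv : ∀ g ∈ MulAction.stabilizer G (Quot.mk (BRel dist) x), ∀ a b,
      |h (g • a) - h (g • b) - (h a - h b)| ≤ 2 * δ :=
    fun _ hg => hd.abs_horofunction_smul_sub_le hg
  have hquasi : IsQuasimorphism
      (fun g : MulAction.stabilizer G (Quot.mk (BRel dist) x) => h (g • o) - h o) (2 * δ) := by
    intro g k
    convert hequiv g g.2 (k • o) o using 2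
    simp only [mul_smul, Subgroup.smul_def]
    ring
  refine hquasi.exists_zpowers_finiteIndex fun K => ?_
  have hfin := (hd.isCoarseHorofunction_horofunction x.2).finite_setOf_abs_le hgeo hacyl hequiv o K
  exact (hfin.preimage Subtype.val_injective.injOn).subset fun g hg => ⟨g.2, hg⟩

end BoundaryHorofunction

theorem statement19_general {α G : Type*} [PseudoMetricSpace α] [Group G] [MulAction G α]
    [IsIsometricSMul G α] {δ C : ℝ} (hgeo : IsWeaklyGeodesic α C)
    (hd : HyperbolicWith (dist : α → α → ℝ) δ) (hacyl : IsAcylindrical G α)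
    (ξ : Bdry (dist : α → α → ℝ)) :
    (∃ (Z : Subgroup G) (g₀ : G) (T : Finset G),
      (∀ z ∈ Z, BFixes dist z ξ) ∧ (∀ z ∈ Z, ∃ n : ℤ, z = g₀ ^ n) ∧
      {g : G | BFixes dist g ξ} ⊆ ⋃ t ∈ T, (fun z => t * z) '' (Z : Set G)) ∧
    AmenableSet {g : G | BFixes dist g ξ} := by
  have hstab : {g : G | BFixes dist g ξ} = MulAction.stabilizer G ξ :=
    Set.ext fun _ => bFixes_iff_mem_stabilizer
  obtain ⟨z, hz⟩ := hd.exists_zpowers_finiteIndex_stabilizer hgeo hacyl ξ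
  obtain ⟨T, hT⟩ := exists_finset_subset_iUnion_zpowers z
  refine ⟨⟨Subgroup.zpowers z, z, T, fun k hk => ?_, fun k hk => ?_, hstab ▸ hT⟩,
    hstab ▸ amenableSet_of_zpowers_finiteIndex z⟩
  · exact bFixes_iff_mem_stabilizer.2 (Subgroup.zpowers_le.2 z.2 hk)
  · obtain ⟨n, rfl⟩ := Subgroup.mem_zpowers_iff.1 hk
    exact ⟨n, rfl⟩

/-- Lemma 5.4: if a group `G` acts isometrically and acylindrically on
a δ-hyperbolic geodesic metric space, then the stabilizer of any Gromov boundary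
point is virtually cyclic (it contains a cyclic subgroup `Z` such that finitely many
cosets of `Z` cover the stabilizer); in particular, if `G` is countable then all such
stabilizers are amenable. -/
theorem statement19 (α G : Type*) [MetricSpace α] [Group G] [MulAction G α] (δ : ℕ)
    (hgeo : GeodesicSpace α)
    (hhyp : HyperbolicWith (fun x y : α => dist x y) (δ : ℝ))
    (hiso : ∀ g : G, Isometry (fun x : α => g • x))
    (hacyl : ∀ ε : ℝ, 0 < ε → ∃ R : ℝ, 0 < R ∧ ∃ N : ℕ, 0 < N ∧
      ∀ x y : α, R ≤ dist x y →
        {g : G | dist x (g • x) ≤ ε ∧ dist y (g • y) ≤ ε}.Finite ∧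
        {g : G | dist x (g • x) ≤ ε ∧ dist y (g • y) ≤ ε}.ncard ≤ N)
    (ξ : Bdry (fun x y : α => dist x y)) :
    (∃ (Z : Subgroup G) (g₀ : G) (T : Finset G),
      (∀ z ∈ Z, BFixes (fun x y : α => dist x y) z ξ) ∧
      (∀ z ∈ Z, ∃ n : ℤ, z = g₀ ^ n) ∧
      {g : G | BFixes (fun x y : α => dist x y) g ξ} ⊆
        ⋃ t ∈ T, (fun z => t * z) '' (Z : Set G)) ∧
    (Countable G → AmenableSet {g : G | BFixes (fun x y : α => dist x y) g ξ}) := by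
  have : IsIsometricSMul G α := ⟨hiso⟩
  have hacyl' : IsAcylindrical G α := fun ε hε =>
    let ⟨R, _, N, _, hRN⟩ := hacyl ε hε
    ⟨R, N, fun x y hxy => Set.encard_le_coe_iff_finite_ncard_le.2 (hRN x y hxy)⟩
  exact (statement19_general hgeo.isWeaklyGeodesic hhyp hacyl' ξ).imp_right fun h _ => h

end ArXiv
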